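/- Let S and A be nonempty finite types, P : S → A → PMF S a transition kernel, ρ0 a probability distribution on S, and γ ∈ [0,1). Let π and π' be policies with π(a|s) > 0 for all s, a, let σ ≥ 0, let R_e : S × A → ℝ be a reward function, g : S × A → ℝ any function and δ ∈ ℝ, and set R_i(s,a) = min{g(s,a) − δ, 0} and R(s,a) = R_e(s,a) + σ R_i(s,a). For any function f : S → ℝ define δ_f(s,a,s') = R(s,a) + γ f(s') − f(s), ε_f^{π'} = max_s |Σ_a π'(a|s) Σ_{s'} P(s'|s,a) δ_f(s,a,s')|, and T_{π,f}(π') = Σ_s d^π(s) Σ_a π(a|s) Σ_{s'} P(s'|s,a) (π'(a|s)/π(a|s) − 1) δ_f(s,a,s'). Then J_R(π') − J_R(π) ≤ T_{π,f}(π')/(1−γ) + (2γ ε_f^{π'}/(1−γ)²) · Σ_s d^π(s) D_TV(π'‖π)[s]. -/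

import Mathlib

open scoped BigOperators

section MDPdefs

variable {S A : Type*} [Fintype S] [Fintype A]

/-- The state-marginal distribution at time `t` under policy `π`:
`ρ_0 = ρ0` and `ρ_{t+1}(s') = ∑_s ∑_a ρ_t(s) π(a|s) P(s'|s,a)`. -/
noncomputable def stateMarginal (P : S → A → PMF S) (ρ0 : PMF S) (π : S → PMF A) :
    ℕ → S → ℝ
  | 0, s => (ρ0 s).toReal
  | t + 1, s' => ∑ s : S, ∑ a : A,
      stateMarginal P ρ0 π t s * (π s a).toReal * (P s a s').toReal

/-- The discounted state visitation distribution `d^π(s) = (1-γ) ∑_t γ^t ρ_t^π(s)`. -/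
noncomputable def dVisit (P : S → A → PMF S) (ρ0 : PMF S) (γ : ℝ) (π : S → PMF A)
    (s : S) : ℝ :=
  (1 - γ) * ∑' t : ℕ, γ ^ t * stateMarginal P ρ0 π t s

/-- The discounted return `J_R(π) = ∑_t γ^t ∑_s ∑_a ρ_t^π(s) π(a|s) R(s,a)`. -/
noncomputable def Jret (P : S → A → PMF S) (ρ0 : PMF S) (γ : ℝ) (π : S → PMF A)
    (R : S → A → ℝ) : ℝ :=
  ∑' t : ℕ, γ ^ t * ∑ s : S, ∑ a : A,
      stateMarginal P ρ0 π t s * (π s a).toReal * R s a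

/-- Total variational divergence between the action distributions of two policies at `s`. -/
noncomputable def dTV (π' π : S → PMF A) (s : S) : ℝ :=
  (1 / 2) * ∑ a : A, |(π' s a).toReal - (π s a).toReal|

/-- Value function of `π` with reward `R`: expected discounted return started at `s`. -/
noncomputable def Vval (P : S → A → PMF S) (γ : ℝ) (π : S → PMF A) (R : S → A → ℝ)
    (s : S) : ℝ :=
  Jret P (PMF.pure s) γ π R

/-- State-action value function `Q^π_R(s,a) = R(s,a) + γ ∑_{s'} P(s'|s,a) V^π_R(s')`. -/
noncomputable def Qval (P : S → A → PMF S) (γ : ℝ) (π : S → PMF A) (R : S → A → ℝ)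
    (s : S) (a : A) : ℝ :=
  R s a + γ * ∑ s' : S, (P s a s').toReal * Vval P γ π R s'

/-- Advantage function `A^π_R(s,a) = Q^π_R(s,a) - V^π_R(s)`. -/
noncomputable def Aadv (P : S → A → PMF S) (γ : ℝ) (π : S → PMF A) (R : S → A → ℝ)
    (s : S) (a : A) : ℝ :=
  Qval P γ π R s a - Vval P γ π R s

/-- Kullback–Leibler divergence between the action distributions at state `s`. -/
noncomputable def dKL (π' π : S → PMF A) (s : S) : ℝ :=
  ∑ a : A, (π' s a).toReal * Real.log ((π' s a).toReal / (π s a).toReal)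

end MDPdefs

section MDPhelpers

variable {S A : Type*} [Fintype S] [Fintype A]

lemma pmf_sum_toReal {B : Type*} [Fintype B] (p : PMF B) : ∑ b, (p b).toReal = 1 := by
  rw [← ENNReal.toReal_sum (fun b _ => p.apply_ne_top b), ← tsum_fintype (L := .unconditional B),
    p.tsum_coe, ENNReal.toReal_one]

lemma sm_nonneg (P : S → A → PMF S) (ρ0 : PMF S) (π : S → PMF A) (t : ℕ) (s : S) :
    0 ≤ stateMarginal P ρ0 π t s := by
  induction t generalizing s with
  | zero => simp [stateMarginal]
  | succ t ih =>
    simp only [stateMarginal]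
    exact Finset.sum_nonneg fun x _ => Finset.sum_nonneg fun a _ =>
      mul_nonneg (mul_nonneg (ih x) ENNReal.toReal_nonneg) ENNReal.toReal_nonneg

lemma sm_sum (P : S → A → PMF S) (ρ0 : PMF S) (π : S → PMF A) (t : ℕ) :
    ∑ s, stateMarginal P ρ0 π t s = 1 := by
  induction t with
  | zero => simpa [stateMarginal] using pmf_sum_toReal ρ0
  | succ t ih =>
    simp only [stateMarginal]
    rw [Finset.sum_comm, ← ih]
    refine Finset.sum_congr rfl fun s _ => ?_
    rw [Finset.sum_comm]
    simp_rw [← Finset.mul_sum, pmf_sum_toReal, mul_one, ← Finset.mul_sum, pmf_sum_toReal, mul_one]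

lemma sm_le (P : S → A → PMF S) (ρ0 : PMF S) (π : S → PMF A) (t : ℕ) (s : S) :
    stateMarginal P ρ0 π t s ≤ 1 := by
  rw [← sm_sum P ρ0 π t]
  exact Finset.single_le_sum (fun x _ => sm_nonneg P ρ0 π t x) (Finset.mem_univ s)

lemma sm_summable (P : S → A → PMF S) (ρ0 : PMF S) (γ : ℝ) (hγ0 : 0 ≤ γ) (hγ1 : γ < 1)
    (π : S → PMF A) (s : S) : Summable fun t : ℕ => γ ^ t * stateMarginal P ρ0 π t s := by
  refine Summable.of_nonneg_of_le
    (fun t => mul_nonneg (pow_nonneg hγ0 t) (sm_nonneg P ρ0 π t s))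
    (fun t => mul_le_of_le_one_right (pow_nonneg hγ0 t) (sm_le P ρ0 π t s))
    (summable_geometric_of_lt_one hγ0 hγ1)

/-- unnormalised discounted visitation -/
noncomputable def gV (P : S → A → PMF S) (ρ0 : PMF S) (γ : ℝ) (π : S → PMF A) (s : S) : ℝ :=
  ∑' t : ℕ, γ ^ t * stateMarginal P ρ0 π t s

lemma gV_nonneg (P : S → A → PMF S) (ρ0 : PMF S) (γ : ℝ) (hγ0 : 0 ≤ γ)
    (π : S → PMF A) (s : S) : 0 ≤ gV P ρ0 γ π s :=
  tsum_nonneg fun t => mul_nonneg (pow_nonneg hγ0 t) (sm_nonneg P ρ0 π t s)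

lemma gV_lin (P : S → A → PMF S) (ρ0 : PMF S) (γ : ℝ) (hγ0 : 0 ≤ γ) (hγ1 : γ < 1)
    (π : S → PMF A) (R : S → A → ℝ) :
    ∑' t : ℕ, γ ^ t * ∑ s : S, ∑ a : A, stateMarginal P ρ0 π t s * (π s a).toReal * R s a
      = ∑ s, ∑ a, gV P ρ0 γ π s * (π s a).toReal * R s a := by
  have h : ∀ t : ℕ, γ ^ t * ∑ s : S, ∑ a : A,
      stateMarginal P ρ0 π t s * (π s a).toReal * R s a
      = ∑ s, (γ ^ t * stateMarginal P ρ0 π t s) * ∑ a, (π s a).toReal * R s a := by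
    intro t
    simp only [Finset.mul_sum, mul_assoc]
  simp_rw [h]
  rw [Summable.tsum_finsetSum
    (fun s _ => (sm_summable P ρ0 γ hγ0 hγ1 π s).mul_right _)]
  refine Finset.sum_congr rfl fun s _ => ?_
  rw [tsum_mul_right]
  simp only [gV, Finset.mul_sum, mul_assoc]

lemma gV_flow (P : S → A → PMF S) (ρ0 : PMF S) (γ : ℝ) (hγ0 : 0 ≤ γ) (hγ1 : γ < 1)
    (π : S → PMF A) (s' : S) :
    gV P ρ0 γ π s' = (ρ0 s').toReal
      + γ * ∑ s, ∑ a, gV P ρ0 γ π s * (π s a).toReal * (P s a s').toReal := by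
  rw [← gV_lin P ρ0 γ hγ0 hγ1 π (fun s a => (P s a s').toReal), gV,
    (sm_summable P ρ0 γ hγ0 hγ1 π s').tsum_eq_zero_add, ← tsum_mul_left]
  congr 1
  · simp [stateMarginal]
  · refine tsum_congr fun t => ?_
    simp only [stateMarginal]
    ring

lemma J_eq (P : S → A → PMF S) (ρ0 : PMF S) (γ : ℝ) (hγ0 : 0 ≤ γ) (hγ1 : γ < 1)
    (π : S → PMF A) (R : S → A → ℝ) (f : S → ℝ) :
    Jret P ρ0 γ π R = ∑ s, (ρ0 s).toReal * f s + ∑ s, gV P ρ0 γ π s *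
      ∑ a, (π s a).toReal * ∑ s', (P s a s').toReal * (R s a + γ * f s' - f s) := by
  have h1 : ∀ s, ∑ a, (π s a).toReal * ∑ s', (P s a s').toReal * (R s a + γ * f s' - f s)
      = ∑ a, (π s a).toReal * R s a
        + γ * ∑ a, ∑ s', (π s a).toReal * (P s a s').toReal * f s' - f s := by
    intro s
    have h2 : ∀ a, (π s a).toReal * ∑ s', (P s a s').toReal * (R s a + γ * f s' - f s)
      = (π s a).toReal * R s a
        + γ * ∑ s', (π s a).toReal * (P s a s').toReal * f s' - (π s a).toReal * f s := by
      intro a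
      have h3 : ∑ s', (P s a s').toReal * (R s a + γ * f s' - f s)
        = (∑ s', (P s a s').toReal) * (R s a - f s) + γ * ∑ s', (P s a s').toReal * f s' := by
        rw [Finset.sum_mul, Finset.mul_sum, ← Finset.sum_add_distrib]
        exact Finset.sum_congr rfl fun x _ => by ring
      rw [h3, pmf_sum_toReal]
      simp_rw [mul_assoc, ← Finset.mul_sum]
      ring
    simp_rw [h2]
    rw [Finset.sum_sub_distrib, Finset.sum_add_distrib, ← Finset.sum_mul, pmf_sum_toReal,
      one_mul, ← Finset.mul_sum]
  have hf : ∑ s, gV P ρ0 γ π s * f s = ∑ s, (ρ0 s).toReal * f s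
      + γ * ∑ s, gV P ρ0 γ π s * ∑ a, ∑ s', (π s a).toReal * (P s a s').toReal * f s' := by
    have h4 : ∑ s, gV P ρ0 γ π s * ∑ a, ∑ s', (π s a).toReal * (P s a s').toReal * f s'
        = ∑ s', (∑ s, ∑ a, gV P ρ0 γ π s * (π s a).toReal * (P s a s').toReal) * f s' := by
      simp only [Finset.mul_sum, Finset.sum_mul]
      conv_rhs => rw [Finset.sum_comm]
      refine Finset.sum_congr rfl fun s _ => ?_
      rw [Finset.sum_comm]
      refine Finset.sum_congr rfl fun s' _ => ?_
      exact Finset.sum_congr rfl fun a _ => by ring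
    rw [h4, Finset.mul_sum, ← Finset.sum_add_distrib]
    refine Finset.sum_congr rfl fun s _ => ?_
    conv_lhs => rw [gV_flow P ρ0 γ hγ0 hγ1 π s]
    ring
  simp_rw [h1, mul_sub, mul_add]
  rw [Finset.sum_sub_distrib, Finset.sum_add_distrib, hf, Jret, gV_lin P ρ0 γ hγ0 hγ1]
  simp only [Finset.mul_sum, mul_assoc, mul_left_comm γ]
  ring

lemma gV_diff (P : S → A → PMF S) (ρ0 : PMF S) (γ : ℝ) (hγ0 : 0 ≤ γ) (hγ1 : γ < 1)
    (π π' : S → PMF A) :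
    (1 - γ) * ∑ s, |gV P ρ0 γ π' s - gV P ρ0 γ π s|
      ≤ 2 * γ * ∑ s, gV P ρ0 γ π s * dTV π' π s := by
  set G := gV P ρ0 γ π with hG
  set G' := gV P ρ0 γ π' with hG'
  have hGn : ∀ s, 0 ≤ G s := gV_nonneg P ρ0 γ hγ0 π
  have h1 : ∀ s', |G' s' - G s'| ≤ γ * ∑ s, ∑ a,
      (|G' s - G s| * (π' s a).toReal + G s * |(π' s a).toReal - (π s a).toReal|)
        * (P s a s').toReal := by
    intro s'
    have e : G' s' - G s' = γ * ∑ s, ∑ a, ((G' s - G s) * (π' s a).toReal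
        + G s * ((π' s a).toReal - (π s a).toReal)) * (P s a s').toReal := by
      rw [hG, hG', gV_flow P ρ0 γ hγ0 hγ1 π s', gV_flow P ρ0 γ hγ0 hγ1 π' s',
        add_sub_add_left_eq_sub, ← mul_sub, ← Finset.sum_sub_distrib]
      congr 1
      refine Finset.sum_congr rfl fun s _ => ?_
      rw [← Finset.sum_sub_distrib]
      exact Finset.sum_congr rfl fun a _ => by ring
    rw [e, abs_mul, abs_of_nonneg hγ0]
    refine mul_le_mul_of_nonneg_left ?_ hγ0
    refine (Finset.abs_sum_le_sum_abs _ _).trans (Finset.sum_le_sum fun s _ => ?_)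
    refine (Finset.abs_sum_le_sum_abs _ _).trans (Finset.sum_le_sum fun a _ => ?_)
    rw [abs_mul, abs_of_nonneg (ENNReal.toReal_nonneg (a := P s a s'))]
    refine mul_le_mul_of_nonneg_right ?_ ENNReal.toReal_nonneg
    refine (abs_add_le _ _).trans (le_of_eq ?_)
    rw [abs_mul, abs_mul, abs_of_nonneg (hGn s),
      abs_of_nonneg (ENNReal.toReal_nonneg (a := π' s a))]
  have h2 := Finset.sum_le_sum fun s' (_ : s' ∈ (Finset.univ : Finset S)) => h1 s'
  have h3 : ∑ s', γ * ∑ s, ∑ a,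
      (|G' s - G s| * (π' s a).toReal + G s * |(π' s a).toReal - (π s a).toReal|)
        * (P s a s').toReal
      = γ * (∑ s, |G' s - G s| + 2 * ∑ s, G s * dTV π' π s) := by
    rw [← Finset.mul_sum, Finset.sum_comm]
    congr 1
    rw [Finset.mul_sum, ← Finset.sum_add_distrib]
    refine Finset.sum_congr rfl fun s _ => ?_
    rw [Finset.sum_comm]
    simp_rw [← Finset.mul_sum, pmf_sum_toReal, mul_one]
    rw [Finset.sum_add_distrib, ← Finset.mul_sum, ← Finset.mul_sum, pmf_sum_toReal, dTV]
    ring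
  rw [h3] at h2
  linarith

end MDPhelpers

/-- Theorem 1 (upper bound): performance bound of the trajectory-constrained
exploration strategy. -/
theorem tace_performance_upper_bound
    {S A : Type*} [Fintype S] [Fintype A] [Nonempty S] [Nonempty A]
    (P : S → A → PMF S) (ρ0 : PMF S) (γ : ℝ) (hγ0 : 0 ≤ γ) (hγ1 : γ < 1)
    (π π' : S → PMF A) (hπpos : ∀ s a, 0 < (π s a).toReal)
    (σ : ℝ) (hσ : 0 ≤ σ) (Re g : S → A → ℝ) (δ : ℝ) (f : S → ℝ) :
    let Ri : S → A → ℝ := fun s a => min (g s a - δ) 0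
    let R : S → A → ℝ := fun s a => Re s a + σ * Ri s a
    let δf : S → A → S → ℝ := fun s a s' => R s a + γ * f s' - f s
    let εf : ℝ :=
      ⨆ s : S, |∑ a : A, (π' s a).toReal * ∑ s' : S, (P s a s').toReal * δf s a s'|
    let Tf : ℝ := ∑ s : S, dVisit P ρ0 γ π s * ∑ a : A, (π s a).toReal *
        ∑ s' : S, (P s a s').toReal *
          (((π' s a).toReal / (π s a).toReal - 1) * δf s a s')
    Jret P ρ0 γ π' R - Jret P ρ0 γ π R ≤
      Tf / (1 - γ) +
        (2 * γ * εf / (1 - γ) ^ 2) * ∑ s : S, dVisit P ρ0 γ π s * dTV π' π s := by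
  intro Ri R δf εf Tf
  have hg : 0 < 1 - γ := by linarith
  set u : S → ℝ := fun s =>
    ∑ a : A, (π' s a).toReal * ∑ s' : S, (P s a s').toReal * δf s a s' with hu
  set w : S → ℝ := fun s =>
    ∑ a : A, (π s a).toReal * ∑ s' : S, (P s a s').toReal * δf s a s' with hw
  have hd : ∀ s, dVisit P ρ0 γ π s = (1 - γ) * gV P ρ0 γ π s := fun s => rfl
  have hT : Tf = (1 - γ) * ∑ s, gV P ρ0 γ π s * (u s - w s) := by
    simp only [Tf, hd]
    rw [Finset.mul_sum]
    refine Finset.sum_congr rfl fun s _ => ?_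
    rw [mul_assoc]
    congr 2
    rw [hu, hw]
    simp only
    rw [← Finset.sum_sub_distrib]
    refine Finset.sum_congr rfl fun a _ => ?_
    rw [← sub_mul, Finset.mul_sum, Finset.mul_sum]
    refine Finset.sum_congr rfl fun s' _ => ?_
    have := (hπpos s a).ne'
    field_simp
  have hE : ∀ s, |u s| ≤ εf := fun s =>
    le_ciSup (f := fun s => |u s|) (Set.finite_range _).bddAbove s
  have hE0 : 0 ≤ εf := (abs_nonneg _).trans (hE (Classical.arbitrary S))
  have hJ : Jret P ρ0 γ π' R - Jret P ρ0 γ π R =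
      ∑ s, gV P ρ0 γ π s * (u s - w s) + ∑ s, (gV P ρ0 γ π' s - gV P ρ0 γ π s) * u s := by
    rw [J_eq P ρ0 γ hγ0 hγ1 π' R f, J_eq P ρ0 γ hγ0 hγ1 π R f, add_sub_add_left_eq_sub,
      ← Finset.sum_sub_distrib, ← Finset.sum_add_distrib]
    refine Finset.sum_congr rfl fun s _ => ?_
    change gV P ρ0 γ π' s * u s - gV P ρ0 γ π s * w s = _
    ring
  have hb : ∑ s, (gV P ρ0 γ π' s - gV P ρ0 γ π s) * u s
      ≤ (∑ s, |gV P ρ0 γ π' s - gV P ρ0 γ π s|) * εf := by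
    rw [Finset.sum_mul]
    refine Finset.sum_le_sum fun s _ => (le_abs_self _).trans ?_
    rw [abs_mul]
    exact mul_le_mul_of_nonneg_left (hE s) (abs_nonneg _)
  have hD := gV_diff P ρ0 γ hγ0 hγ1 π π'
  have h5 : ∑ s, dVisit P ρ0 γ π s * dTV π' π s
      = (1 - γ) * ∑ s, gV P ρ0 γ π s * dTV π' π s := by
    simp only [hd, Finset.mul_sum, mul_assoc]
  rw [hJ, hT, h5, mul_div_cancel_left₀ _ hg.ne']
  refine add_le_add le_rfl (hb.trans ?_)
  have h6 : 2 * γ * εf / (1 - γ) ^ 2 * ((1 - γ) * ∑ s, gV P ρ0 γ π s * dTV π' π s)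
      = (2 * γ * ∑ s, gV P ρ0 γ π s * dTV π' π s) * εf / (1 - γ) := by
    field_simp
  rw [h6, le_div_iff₀ hg]
  calc _ = ((1 - γ) * ∑ s, |gV P ρ0 γ π' s - gV P ρ0 γ π s|) * εf := by ring
    _ ≤ _ := mul_le_mul_of_nonneg_right hD hE0
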